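/- arXiv:math/0602243 — 8 statements merged into one kernel-verified Lean document; each statement's English description precedes it below -/
import Mathlib

section
/- Let F(u) = 1 - exp(-e^u) be the extreme value distribution function, with density f(u) = e^u exp(-e^u) and derivative ḟ(u) = (1 - e^u) e^u exp(-e^u). Then condition B5(d) holds for F: for every u ∈ ℝ, f(u)² - ḟ(u)·F(u) > 0 and f(u)² + ḟ(u)·(1 - F(u)) > 0. -/
/-- B5(d) holds for the extreme value distribution `F(u) = 1 - exp(-e^u)`:
for every `u`, `f(u)^2 - ḟ(u) F(u) > 0` and `f(u)^2 + ḟ(u)(1 - F(u)) > 0`. -/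
theorem extremeValue_B5d
    (F f fdot : ℝ → ℝ)
    (hF : ∀ u, F u = 1 - Real.exp (-(Real.exp u)))
    (hf : ∀ u, f u = Real.exp u * Real.exp (-(Real.exp u)))
    (hfdot : ∀ u, fdot u = (1 - Real.exp u) * Real.exp u * Real.exp (-(Real.exp u))) :
    ∀ u : ℝ, 0 < f u ^ 2 - fdot u * F u ∧ 0 < f u ^ 2 + fdot u * (1 - F u) := by
  intro u
  rw [hF, hf, hfdot]
  have hx : 0 < Real.exp u := Real.exp_pos u
  generalize Real.exp u = x at hx
  have hE : 0 < Real.exp (-x) := Real.exp_pos _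
  have hlt : -x + 1 < Real.exp (-x) := Real.add_one_lt_exp (neg_ne_zero.mpr hx.ne')
  generalize Real.exp (-x) = E at hE hlt
  -- With `x = e^u` and `E = e^(-x)` the two quantities factor as `x E (x - 1 + E)` and `x E²`.
  constructor
  · have h : 0 < x * E * (x - 1 + E) := mul_pos (mul_pos hx hE) (by linarith)
    linear_combination h
  · have h : 0 < x * E ^ 2 := by positivity
    linear_combination h
end

section
/- Fix γ ∈ (0, ∞) and let F(u) = 1 - (1 + γe^u)^{-1/γ} be the Pareto (odds-rate) distribution function, with density f(u) = e^u(1 + γe^u)^{-1/γ - 1} and derivative ḟ = f′. Then condition B5(d) holds for F: for every u ∈ ℝ, f(u)² - ḟ(u)·F(u) > 0 and f(u)² + ḟ(u)·(1 - F(u)) > 0. -/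
/-!
Write `x = exp u`, `A = 1 + γ x` and `S = A ^ (-1/γ) = 1 - F u`. Then `f = x S / A` and
`f' = x S (1 - x) / A ^ 2`, so that

* `f ^ 2 - f' F = (x S / A ^ 2) (S + x - 1)`,
* `f ^ 2 + f' (1 - F) = x S ^ 2 / A ^ 2`.

The second quantity is visibly positive. For the first, `log A ≤ γ x` gives
`S ≥ exp (-x) > 1 - x`.
-/

/-- The survival function `(1 + γ x) ^ (-1/γ)` dominates its limit `exp (-x)` as `γ ↓ 0`, hence
also the tangent line `1 - x`. -/
lemma one_sub_lt_pareto_survival {γ x : ℝ} (hγ : 0 < γ) (hx : 0 < x) :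
    1 - x < (1 + γ * x) ^ (-(1 / γ)) := by
  have hA : 0 < 1 + γ * x := by positivity
  have hlog : Real.log (1 + γ * x) ≤ γ * x := by
    linarith [Real.log_le_sub_one_of_pos hA]
  have hexp : -x ≤ Real.log (1 + γ * x) * -(1 / γ) := by
    have h := mul_le_mul_of_nonneg_right hlog (one_div_pos.mpr hγ).le
    have e : γ * x * (1 / γ) = x := by field_simp
    linarith
  calc 1 - x = -x + 1 := by ring
    _ < Real.exp (-x) := Real.add_one_lt_exp (by linarith)
    _ ≤ (1 + γ * x) ^ (-(1 / γ)) := by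
      rw [Real.rpow_def_of_pos hA]
      exact Real.exp_le_exp.mpr hexp

lemma hasDerivAt_pareto_density {γ : ℝ} (hγ : 0 < γ) (u : ℝ) :
    HasDerivAt (fun v : ℝ => Real.exp v * (1 + γ * Real.exp v) ^ (-(1 / γ) - 1))
      (Real.exp u * (1 + γ * Real.exp u) ^ (-(1 / γ)) * (1 - Real.exp u)
        / (1 + γ * Real.exp u) ^ 2) u := by
  have hA : 0 < 1 + γ * Real.exp u := by positivity
  have hlin : HasDerivAt (fun v : ℝ => 1 + γ * Real.exp v) (γ * Real.exp u) u :=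
    ((Real.hasDerivAt_exp u).const_mul γ).const_add 1
  have h := (Real.hasDerivAt_exp u).mul
    (hlin.rpow_const (p := -(1 / γ) - 1) (Or.inl hA.ne'))
  refine h.congr_deriv ?_
  rw [Real.rpow_sub_one hA.ne' (-(1 / γ) - 1), Real.rpow_sub_one hA.ne' (-(1 / γ))]
  -- `field_simp` must not rewrite the exponent `-(1 / γ)`, so the power is made opaque.
  generalize (1 + γ * Real.exp u) ^ (-(1 / γ)) = S
  field_simp
  ring

/-- B5(d) for the Pareto (odds-rate) family `F(u) = 1 - (1 + γ e^u)^(-1/γ)`, `γ ∈ (0,∞)`,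
with density `f(u) = e^u (1 + γ e^u)^(-1/γ - 1)` and `ḟ = f'`. -/
theorem pareto_B5d
    (γ : ℝ) (hγ : 0 < γ)
    (F f fdot : ℝ → ℝ)
    (hF : ∀ u, F u = 1 - (1 + γ * Real.exp u) ^ (-(1 / γ)))
    (hf : ∀ u, f u = Real.exp u * (1 + γ * Real.exp u) ^ (-(1 / γ) - 1))
    (hfdot : ∀ u, HasDerivAt f (fdot u) u) :
    ∀ u : ℝ, 0 < f u ^ 2 - fdot u * F u ∧ 0 < f u ^ 2 + fdot u * (1 - F u) := by
  intro u
  have hx : 0 < Real.exp u := Real.exp_pos u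
  have hA : 0 < 1 + γ * Real.exp u := by positivity
  have hd := (hfdot u).unique (funext hf ▸ hasDerivAt_pareto_density hγ u)
  have hS : 0 < (1 + γ * Real.exp u) ^ (-(1 / γ)) := Real.rpow_pos_of_pos hA _
  have hlt := one_sub_lt_pareto_survival hγ hx
  rw [hd, hF, hf, Real.rpow_sub_one hA.ne']
  generalize (1 + γ * Real.exp u) ^ (-(1 / γ)) = S at *
  generalize 1 + γ * Real.exp u = A at *
  generalize Real.exp u = x at *
  constructor
  · have e : (x * (S / A)) ^ 2 - x * S * (1 - x) / A ^ 2 * (1 - S)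
        = x * S / A ^ 2 * (S + x - 1) := by
      field_simp
      ring
    rw [e]
    exact mul_pos (by positivity) (by linarith)
  · have e : (x * (S / A)) ^ 2 + x * S * (1 - x) / A ^ 2 * (1 - (1 - S))
        = x * S ^ 2 / A ^ 2 := by
      field_simp
      ring
    rw [e]
    positivity
end

section
/- Fix γ ∈ (1, ∞), set r_γ = γ/(2Γ(1/γ)), and let F(u) = r_γ ∫_{-∞}^u exp(-|s|^γ) ds, with density f(u) = r_γ exp(-|u|^γ) and derivative ḟ(u) = -γ·sign(u)·|u|^{γ-1} f(u). Then condition B5(d) holds for F: for every u ∈ ℝ, f(u)² - ḟ(u)·F(u) > 0 and f(u)² + ḟ(u)·(1 - F(u)) > 0. -/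
open MeasureTheory

/-!
Both inequalities reduce to the Mills-ratio bound
`γ u ^ (γ - 1) * ∫ s in Ioi u, exp (-s ^ γ) < exp (-u ^ γ)` for `u > 0` (`expPower_tail_lt`).
It holds because `s ↦ s ^ (γ - 1)` is strictly increasing, so the left side is strictly less than
`∫ s in Ioi u, γ s ^ (γ - 1) * exp (-s ^ γ)`, whose integrand has primitive `-exp (-s ^ γ)`.

Since the density is even with total mass one, `F u` and `1 - F u` are the lower and upper tail
masses, both equal to `r` times an integral over a half-line `Ioi`. For `u ≠ 0`, one of the
two inequalities is a sum of a positive and a nonnegative term, and the other is the bound at `|u|`. At `u = 0` the derivative vanishes.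
-/

lemma integral_exp_neg_abs_rpow {γ : ℝ} (hγ : 1 < γ) :
    ∫ s : ℝ, Real.exp (-(|s| ^ γ)) = 2 * Real.Gamma (1 / γ) / γ := by
  have h0 : 0 < γ := by linarith
  rw [integral_comp_abs (f := fun s : ℝ => Real.exp (-(s ^ γ))), integral_exp_neg_rpow h0,
    Real.Gamma_add_one (by positivity)]
  ring

/-- Integrability is read off the integral, which is nonzero. -/
lemma integrable_exp_neg_abs_rpow {γ : ℝ} (hγ : 1 < γ) :
    Integrable (fun s : ℝ => Real.exp (-(|s| ^ γ))) := by
  have h0 : 0 < γ := by linarith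
  have hG : 0 < Real.Gamma (1 / γ) := Real.Gamma_pos_of_pos (by positivity)
  refine Integrable.of_integral_ne_zero ?_
  rw [integral_exp_neg_abs_rpow hγ]
  positivity

/-- The strict Mills-ratio bound for the tail of `exp (-|s| ^ γ)`. -/
lemma expPower_tail_lt {γ : ℝ} (hγ : 1 < γ) {u : ℝ} (hu : 0 < u) :
    γ * u ^ (γ - 1) * ∫ s in Set.Ioi u, Real.exp (-(|s| ^ γ)) < Real.exp (-(u ^ γ)) := by
  have h0 : 0 < γ := by linarith
  have hsub : Set.Ioi u ⊆ Set.Ioi (0 : ℝ) := Set.Ioi_subset_Ioi hu.le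
  have hint1 : IntegrableOn (fun s : ℝ => γ * s ^ (γ - 1) * Real.exp (-(s ^ γ))) (Set.Ioi u) := by
    have := ((integrableOn_rpow_mul_exp_neg_rpow (p := γ) (s := γ - 1) (by linarith)
      h0).mono_set hsub).const_mul γ
    simpa [mul_assoc, IntegrableOn] using this
  have hint2 : IntegrableOn (fun s : ℝ => γ * u ^ (γ - 1) * Real.exp (-(s ^ γ))) (Set.Ioi u) := by
    have := ((integrableOn_rpow_mul_exp_neg_rpow (p := γ) (s := 0) (by norm_num)
      h0).mono_set hsub).const_mul (γ * u ^ (γ - 1))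
    simpa [IntegrableOn] using this
  have hprim : ∫ s in Set.Ioi u, γ * s ^ (γ - 1) * Real.exp (-(s ^ γ)) = Real.exp (-(u ^ γ)) := by
    have hd : ∀ x ∈ Set.Ici u, HasDerivAt (fun s : ℝ => -Real.exp (-(s ^ γ)))
        (γ * x ^ (γ - 1) * Real.exp (-(x ^ γ))) x := by
      intro x _
      have := ((Real.hasDerivAt_rpow_const (x := x) (p := γ) (Or.inr hγ.le)).neg.exp).neg
      exact this.congr_deriv (by simp only [Pi.neg_apply]; ring)
    have ht : Filter.Tendsto (fun s : ℝ => -Real.exp (-(s ^ γ))) Filter.atTop (nhds 0) := by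
      have := (Real.tendsto_exp_neg_atTop_nhds_zero.comp (tendsto_rpow_atTop h0)).neg
      simpa [Function.comp_def] using this
    rw [integral_Ioi_of_hasDerivAt_of_tendsto' hd hint1 ht]
    ring
  have hpos : ∀ s ∈ Set.Ioi u, 0 < γ * s ^ (γ - 1) * Real.exp (-(s ^ γ))
      - γ * u ^ (γ - 1) * Real.exp (-(s ^ γ)) := by
    intro s hs
    have h1 : u ^ (γ - 1) < s ^ (γ - 1) := Real.rpow_lt_rpow hu.le hs (by linarith)
    have h2 := mul_pos (mul_pos h0 (sub_pos.mpr h1)) (Real.exp_pos (-(s ^ γ)))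
    linarith
  have hlt : 0 < ∫ s in Set.Ioi u, (γ * s ^ (γ - 1) * Real.exp (-(s ^ γ))
      - γ * u ^ (γ - 1) * Real.exp (-(s ^ γ))) := by
    rw [setIntegral_pos_iff_support_of_nonneg_ae
      ((ae_restrict_mem measurableSet_Ioi).mono fun s hs => (hpos s hs).le) (hint1.sub hint2)]
    rw [Set.inter_eq_right.mpr fun s hs => Function.mem_support.mpr (hpos s hs).ne']
    simp
  have habs : ∫ s in Set.Ioi u, Real.exp (-(|s| ^ γ)) = ∫ s in Set.Ioi u, Real.exp (-(s ^ γ)) :=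
    setIntegral_congr_fun measurableSet_Ioi fun s hs => by
      have hs0 : 0 < s := hsub hs
      simp only [abs_of_pos hs0]
  rw [integral_sub hint1 hint2, hprim, integral_const_mul] at hlt
  rw [habs]
  linarith

/-- B5(d) for the exponential-power family with parameter `γ ∈ (1,∞)`:
`r_γ = γ/(2Γ(1/γ))`, `F(u) = r_γ ∫_{-∞}^u exp(-|s|^γ) ds`,
`f(u) = r_γ exp(-|u|^γ)` and `ḟ(u) = -γ sign(u) |u|^(γ-1) f(u)`.
Then `f(u)² - ḟ(u) F(u) > 0` and `f(u)² + ḟ(u)(1 - F(u)) > 0` for all `u`. -/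
theorem expPower_B5d
    (γ : ℝ) (hγ : 1 < γ)
    (r : ℝ) (hr : r = γ / (2 * Real.Gamma (1 / γ)))
    (F f fdot : ℝ → ℝ)
    (hF : ∀ u, F u = r * ∫ s in Set.Iic u, Real.exp (-(|s| ^ γ)))
    (hf : ∀ u, f u = r * Real.exp (-(|u| ^ γ)))
    (hfdot : ∀ u, fdot u = -γ * Real.sign u * |u| ^ (γ - 1) * f u) :
    ∀ u : ℝ, 0 < f u ^ 2 - fdot u * F u ∧ 0 < f u ^ 2 + fdot u * (1 - F u) := by
  intro u
  have h0 : 0 < γ := by linarith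
  have hG : 0 < Real.Gamma (1 / γ) := Real.Gamma_pos_of_pos (by positivity)
  have hr0 : 0 < r := by rw [hr]; positivity
  have hI := integrable_exp_neg_abs_rpow hγ
  have hlow : F u = r * ∫ s in Set.Ioi (-u), Real.exp (-(|s| ^ γ)) := by
    rw [hF, ← integral_comp_neg_Iic]
    simp only [abs_neg]
  have hup : 1 - F u = r * ∫ s in Set.Ioi u, Real.exp (-(|s| ^ γ)) := by
    have h1 := intervalIntegral.integral_Iic_add_Ioi (b := u) hI.integrableOn hI.integrableOn
    rw [integral_exp_neg_abs_rpow hγ] at h1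
    have h2 : r * (2 * Real.Gamma (1 / γ) / γ) = 1 := by rw [hr]; field_simp
    rw [hF, ← h2, ← h1]
    ring
  have hnn : ∀ v : ℝ, 0 ≤ ∫ s in Set.Ioi v, Real.exp (-(|s| ^ γ)) :=
    fun v => integral_nonneg fun s => (Real.exp_pos _).le
  have hfpos : 0 < f u := by rw [hf]; positivity
  have hFnn : 0 ≤ F u := by rw [hlow]; exact mul_nonneg hr0.le (hnn _)
  have hFnn' : 0 ≤ 1 - F u := by rw [hup]; exact mul_nonneg hr0.le (hnn _)
  -- The Mills-ratio bound at `|u|`, multiplied by `r * f u`.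
  have key : ∀ v : ℝ, 0 < v → |u| = v → 0 < f u ^ 2 - γ * |u| ^ (γ - 1) * f u *
      (r * ∫ s in Set.Ioi v, Real.exp (-(|s| ^ γ))) := by
    intro v hv huv
    have h := mul_pos (mul_pos hfpos hr0) (sub_pos.mpr (expPower_tail_lt hγ hv))
    have hfv := hf u
    rw [huv] at hfv ⊢
    have e : f u ^ 2 = f u * (r * Real.exp (-(v ^ γ))) := by rw [← hfv]; ring
    rw [e]
    linarith
  have hc : 0 ≤ γ * |u| ^ (γ - 1) * f u := by positivity
  rcases lt_trichotomy u 0 with hu | hu | hu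
  · have hd : fdot u = γ * |u| ^ (γ - 1) * f u := by
      rw [hfdot, Real.sign_of_neg hu]; ring
    rw [hd]
    constructor
    · rw [hlow]
      exact key (-u) (by linarith) (abs_of_neg hu)
    · have := mul_nonneg hc hFnn'
      positivity
  · have hd : fdot u = 0 := by rw [hfdot, hu, Real.sign_zero]; ring
    rw [hd]
    constructor <;> nlinarith
  · have hd : fdot u = -(γ * |u| ^ (γ - 1) * f u) := by
      rw [hfdot, Real.sign_of_pos hu]; ring
    rw [hd]
    constructor
    · have := mul_nonneg hc hFnn
      have := pow_pos hfpos 2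
      linarith
    · rw [hup]
      have := key u hu (abs_of_pos hu)
      linarith
end

section
/- Let F(u) = 1/2 + π^{-1} arctan(u) be the standard Cauchy distribution function, with density f(u) = 1/(π(1 + u²)) and derivative ḟ(u) = -2u/(π(1 + u²)²) = -2πu·f(u)². Then for every u ≥ 1, f(u)² + ḟ(u)·(1 - F(u)) < 0; equivalently, 1 + 2u·arctan(u) < πu for all u ≥ 1. In particular the Cauchy distribution fails condition B5(d). -/
/-!
Put `θ = π/2 - arctan u > 0`. Since `sin x < x` for `x > 0`, one has
`2θ > sin (2θ) = sin (2 arctan u) = 2u / (1 + u²)`, and the last quantity is at least `1/u`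
exactly when `u² ≥ 1`. Hence `1 < 2uθ = πu - 2u arctan u` for `u ≥ 1`. The inequality for the
density follows from the identity
`f² + ḟ (1 - F) = (1 + 2u arctan u - πu) / (π (1 + u²))²`.
-/

theorem sin_two_mul_arctan (u : ℝ) : Real.sin (2 * Real.arctan u) = 2 * u / (1 + u ^ 2) := by
  have h : (0 : ℝ) < 1 + u ^ 2 := by positivity
  rw [Real.sin_two_mul, Real.sin_arctan, Real.cos_arctan]
  field_simp
  rw [Real.sq_sqrt h.le]

theorem one_add_two_mul_arctan_lt (u : ℝ) (hu : 1 ≤ u) :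
    1 + 2 * u * Real.arctan u < Real.pi * u := by
  have hu0 : 0 < u := by linarith
  have h1 : Real.sin (Real.pi - 2 * Real.arctan u) < Real.pi - 2 * Real.arctan u :=
    Real.sin_lt (by linarith [Real.arctan_lt_pi_div_two u])
  rw [Real.sin_pi_sub, sin_two_mul_arctan] at h1
  have h2 : 1 / u ≤ 2 * u / (1 + u ^ 2) := by
    rw [div_le_div_iff₀ hu0 (by positivity)]
    nlinarith
  have h3 := (div_lt_iff₀ hu0).1 (h2.trans_lt h1)
  linarith


/-- The standard Cauchy distribution fails B5(d): with
`F(u) = 1/2 + π⁻¹ arctan u`, `f(u) = 1/(π(1+u²))` and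
`ḟ(u) = -2u/(π(1+u²)²)`, one has `f(u)² + ḟ(u)(1 - F(u)) < 0` for all `u ≥ 1`;
equivalently `1 + 2u arctan u < π u` for all `u ≥ 1`. -/
theorem cauchy_fails_B5d
    (F f fdot : ℝ → ℝ)
    (hF : ∀ u, F u = 1 / 2 + Real.pi⁻¹ * Real.arctan u)
    (hf : ∀ u, f u = 1 / (Real.pi * (1 + u ^ 2)))
    (hfdot : ∀ u, fdot u = -(2 * u) / (Real.pi * (1 + u ^ 2) ^ 2)) :
    (∀ u : ℝ, 1 ≤ u → f u ^ 2 + fdot u * (1 - F u) < 0) ∧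
    (∀ u : ℝ, 1 ≤ u → 1 + 2 * u * Real.arctan u < Real.pi * u) := by
  refine ⟨fun u hu => ?_, one_add_two_mul_arctan_lt⟩
  have hpi := Real.pi_pos
  have key : f u ^ 2 + fdot u * (1 - F u)
      = (1 + 2 * u * Real.arctan u - Real.pi * u) / (Real.pi * (1 + u ^ 2)) ^ 2 := by
    rw [hF, hf, hfdot]
    field_simp
    ring
  rw [key]
  exact div_neg_of_neg_of_pos (by linarith [one_add_two_mul_arctan_lt u hu]) (by positivity)
end

section
/- (Lemma 2.) Let F be a distribution function on ℝ whose density f = F′ has support all of ℝ, is differentiable with derivative ḟ, and |ḟ| is bounded. Suppose: (i) for every τ ∈ [0, ∞) there exists c₁^{(τ)} ∈ [0, ∞) such that for all u ∈ (c₁^{(τ)}, ∞), ḟ(u) < 0 < ḟ(-u) and f(-u)ḟ(-u + τ) - ḟ(-u)f(-u + τ) ≤ 0 ≤ f(u)ḟ(u - τ) - ḟ(u)f(u - τ); and (ii) for every τ ∈ [0, ∞) there exist c₂^{(τ)} ∈ (0, ∞), α_τ ∈ (1/2, 1], and an increasing homeomorphism ξ_*^{(τ)} : [0,1] → [0,1]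 such that F(F^{-1}(ξ_*^{(τ)}(ε)) + τ) ∨ [1 - F(F^{-1}(ξ_*^{(τ)}(1 - ε)) - τ)] ≤ c₂^{(τ)} ε^{α_τ} for all ε sufficiently small. Then F satisfies condition B5(c): for each compact K ⊂ ℝ there exist a constant c ∈ (0, ∞), an exponent α ∈ (1/2, 1], and an increasing homeomorphism ξ : [0,1] → [0,1] such that sup_{s ∈ K} sup_{u, v ∈ [0,1] : |ξ(u) - ξ(v)| ≤ ε} |F(F^{-1}(u) + s) - F(F^{-1}(v) + s)| ≤ c·ε^α for all ε ∈ (0, 1). -/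
/-!
The Hölder condition holds with exponent `α = 1`. Put `τ = sup {|s| : s ∈ K}`. Since `f` is
increasing near `-∞` and decreasing near `+∞`, for every `|s| ≤ τ` the shifted density `f (z + s)`
is at most `f (z + τ)` for `z` near `-∞`, at most `f (z - τ)` for `z` near `+∞`, and at most a
constant times `f z` on the compact middle part. So
`f (z + s) ≤ C * (f (z - τ) + f z + f (z + τ))` for all `z` and all `|s| ≤ τ`, with `C`
independent of `z` and `s` (`exists_density_shift_bound`).

Integrated, this says that the increments of `u ↦ F (F⁻¹ u + s)` are at most `3 * C` times those of
`ξ u = (F (F⁻¹ u - τ) + u + F (F⁻¹ u + τ)) / 3`. This `ξ` is an increasing homeomorphism of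
`[0,1]`, being an average of three of them: `u ↦ F (F⁻¹ u + τ)` is strictly increasing on `[0,1]`
with inverse `u ↦ F (F⁻¹ u - τ)`.
-/

open Set

/-- `ξ` is an increasing homeomorphism of `[0,1]` onto itself: it fixes `0` and `1`,
is strictly increasing on `[0,1]`, and is continuous on `[0,1]`. -/
def IsIncreasingSelfHomeoOfUnitInterval (ξ : ℝ → ℝ) : Prop :=
  ξ 0 = 0 ∧ ξ 1 = 1 ∧ StrictMonoOn ξ (Icc 0 1) ∧ ContinuousOn ξ (Icc 0 1) ∧
    ξ '' Icc 0 1 = Icc 0 1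

/-- The map `u ↦ F(F⁻¹(u) + s)` on `[0,1]`, extended by its continuous limits at the
endpoints: it takes the value `0` at `u = 0` and `1` at `u = 1`. -/
noncomputable def shiftedQuantileMap (F Finv : ℝ → ℝ) (s u : ℝ) : ℝ :=
  if u = 0 then 0 else if u = 1 then 1 else F (Finv u + s)

open Filter Topology

section Shifted

variable {F Finv : ℝ → ℝ}

lemma Finv_apply_F (hFmono : StrictMono F) (hFrange : ∀ x, F x ∈ Ioo (0 : ℝ) 1)
    (hFinv : ∀ u ∈ Ioo (0 : ℝ) 1, F (Finv u) = u) (x : ℝ) : Finv (F x) = x :=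
  hFmono.injective (hFinv _ (hFrange x))

lemma shiftedQuantileMap_zero (s : ℝ) : shiftedQuantileMap F Finv s 0 = 0 := by
  simp [shiftedQuantileMap]

lemma shiftedQuantileMap_one (s : ℝ) : shiftedQuantileMap F Finv s 1 = 1 := by
  simp [shiftedQuantileMap]

lemma shiftedQuantileMap_of_mem_Ioo (s : ℝ) {u : ℝ} (hu : u ∈ Ioo (0 : ℝ) 1) :
    shiftedQuantileMap F Finv s u = F (Finv u + s) := by
  simp [shiftedQuantileMap, hu.1.ne', hu.2.ne]

lemma shiftedQuantileMap_F (hFmono : StrictMono F) (hFrange : ∀ x, F x ∈ Ioo (0 : ℝ) 1)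
    (hFinv : ∀ u ∈ Ioo (0 : ℝ) 1, F (Finv u) = u) (s x : ℝ) :
    shiftedQuantileMap F Finv s (F x) = F (x + s) := by
  rw [shiftedQuantileMap_of_mem_Ioo s (hFrange x), Finv_apply_F hFmono hFrange hFinv]

lemma eq_endpoint_or_eq_F (hFinv : ∀ u ∈ Ioo (0 : ℝ) 1, F (Finv u) = u) {u : ℝ}
    (hu : u ∈ Icc (0 : ℝ) 1) : u = 0 ∨ u = 1 ∨ ∃ x, u = F x := by
  rcases hu.1.eq_or_lt with h | h
  · exact Or.inl h.symm
  rcases hu.2.eq_or_lt with h' | h'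
  · exact Or.inr (Or.inl h')
  · exact Or.inr (Or.inr ⟨Finv u, (hFinv u ⟨h, h'⟩).symm⟩)

lemma shiftedQuantileMap_mem_Icc (hFmono : StrictMono F) (hFrange : ∀ x, F x ∈ Ioo (0 : ℝ) 1)
    (hFinv : ∀ u ∈ Ioo (0 : ℝ) 1, F (Finv u) = u) (s : ℝ) {u : ℝ} (hu : u ∈ Icc (0 : ℝ) 1) :
    shiftedQuantileMap F Finv s u ∈ Icc (0 : ℝ) 1 := by
  rcases eq_endpoint_or_eq_F hFinv hu with rfl | rfl | ⟨x, rfl⟩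
  · simp [shiftedQuantileMap_zero]
  · simp [shiftedQuantileMap_one]
  · rw [shiftedQuantileMap_F hFmono hFrange hFinv]
    exact Ioo_subset_Icc_self (hFrange _)

/-- Shifting by `-s` and then by `s` is the identity on `[0,1]`. -/
lemma shiftedQuantileMap_shiftedQuantileMap_neg (hFmono : StrictMono F)
    (hFrange : ∀ x, F x ∈ Ioo (0 : ℝ) 1) (hFinv : ∀ u ∈ Ioo (0 : ℝ) 1, F (Finv u) = u)
    (s : ℝ) {u : ℝ} (hu : u ∈ Icc (0 : ℝ) 1) :
    shiftedQuantileMap F Finv s (shiftedQuantileMap F Finv (-s) u) = u := by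
  rcases eq_endpoint_or_eq_F hFinv hu with rfl | rfl | ⟨x, rfl⟩
  · simp [shiftedQuantileMap_zero]
  · simp [shiftedQuantileMap_one]
  · simp [shiftedQuantileMap_F hFmono hFrange hFinv]

lemma strictMonoOn_shiftedQuantileMap (hFmono : StrictMono F)
    (hFrange : ∀ x, F x ∈ Ioo (0 : ℝ) 1) (hFinv : ∀ u ∈ Ioo (0 : ℝ) 1, F (Finv u) = u) (s : ℝ) :
    StrictMonoOn (shiftedQuantileMap F Finv s) (Icc 0 1) := by
  intro u hu v hv huv
  rcases eq_endpoint_or_eq_F hFinv hu with rfl | rfl | ⟨x, rfl⟩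
  · rcases eq_endpoint_or_eq_F hFinv hv with rfl | rfl | ⟨y, rfl⟩
    · exact absurd huv (lt_irrefl _)
    · simp [shiftedQuantileMap_zero, shiftedQuantileMap_one]
    · rw [shiftedQuantileMap_zero, shiftedQuantileMap_F hFmono hFrange hFinv]
      exact (hFrange _).1
  · exact absurd hv.2 (not_le.2 huv)
  · rcases eq_endpoint_or_eq_F hFinv hv with rfl | rfl | ⟨y, rfl⟩
    · exact absurd hu.1 (not_le.2 huv)
    · rw [shiftedQuantileMap_one, shiftedQuantileMap_F hFmono hFrange hFinv]
      exact (hFrange _).2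
    · rw [shiftedQuantileMap_F hFmono hFrange hFinv, shiftedQuantileMap_F hFmono hFrange hFinv]
      have := hFmono.lt_iff_lt.1 huv
      exact hFmono (by linarith)

/-- A monotone surjection of `[0,1]` onto itself is continuous. -/
lemma continuousOn_shiftedQuantileMap (hFmono : StrictMono F)
    (hFrange : ∀ x, F x ∈ Ioo (0 : ℝ) 1) (hFinv : ∀ u ∈ Ioo (0 : ℝ) 1, F (Finv u) = u) (s : ℝ) :
    ContinuousOn (shiftedQuantileMap F Finv s) (Icc 0 1) := by
  let g : Icc (0 : ℝ) 1 → Icc (0 : ℝ) 1 := fun u =>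
    ⟨shiftedQuantileMap F Finv s u, shiftedQuantileMap_mem_Icc hFmono hFrange hFinv s u.2⟩
  have hmono : Monotone g := fun u v huv =>
    (strictMonoOn_shiftedQuantileMap hFmono hFrange hFinv s).monotoneOn u.2 v.2 huv
  have hsurj : Function.Surjective g := fun u =>
    ⟨⟨shiftedQuantileMap F Finv (-s) u,
        shiftedQuantileMap_mem_Icc hFmono hFrange hFinv (-s) u.2⟩,
      Subtype.ext (shiftedQuantileMap_shiftedQuantileMap_neg hFmono hFrange hFinv s u.2)⟩
  rw [continuousOn_iff_continuous_domRestrict]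
  exact continuous_subtype_val.comp (hmono.continuous_of_surjective hsurj)

/-- The average of the identity and of the shifted quantile maps for the shifts `-τ` and `τ`. -/
noncomputable def symmetricReparam (F Finv : ℝ → ℝ) (τ u : ℝ) : ℝ :=
  (shiftedQuantileMap F Finv (-τ) u + u + shiftedQuantileMap F Finv τ u) / 3

lemma isIncreasingSelfHomeo_symmetricReparam (hFmono : StrictMono F)
    (hFrange : ∀ x, F x ∈ Ioo (0 : ℝ) 1) (hFinv : ∀ u ∈ Ioo (0 : ℝ) 1, F (Finv u) = u) (τ : ℝ) :
    IsIncreasingSelfHomeoOfUnitInterval (symmetricReparam F Finv τ) := by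
  have h0 : symmetricReparam F Finv τ 0 = 0 := by
    simp [symmetricReparam, shiftedQuantileMap_zero]
  have h1 : symmetricReparam F Finv τ 1 = 1 := by
    norm_num [symmetricReparam, shiftedQuantileMap_one]
  have hmono : StrictMonoOn (symmetricReparam F Finv τ) (Icc 0 1) := by
    intro u hu v hv huv
    have ha := strictMonoOn_shiftedQuantileMap hFmono hFrange hFinv (-τ) hu hv huv
    have hb := strictMonoOn_shiftedQuantileMap hFmono hFrange hFinv τ hu hv huv
    simp only [symmetricReparam]
    linarith
  have hcont : ContinuousOn (symmetricReparam F Finv τ) (Icc 0 1) :=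
    (((continuousOn_shiftedQuantileMap hFmono hFrange hFinv (-τ)).add continuousOn_id).add
      (continuousOn_shiftedQuantileMap hFmono hFrange hFinv τ)).div_const 3
  refine ⟨h0, h1, hmono, hcont, Subset.antisymm ?_ ?_⟩
  · rintro _ ⟨u, hu, rfl⟩
    constructor
    · rw [← h0]
      exact hmono.monotoneOn (left_mem_Icc.2 zero_le_one) hu hu.1
    · rw [← h1]
      exact hmono.monotoneOn hu (right_mem_Icc.2 zero_le_one) hu.2
  · have := intermediate_value_Icc (zero_le_one' ℝ) hcont
    rwa [h0, h1] at this

end Shifted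

/-- A positive, differentiable density with monotone tails dominates its shifts of size at most `τ`,
up to a constant, by the sum of its shifts by `-τ`, `0` and `τ`. -/
lemma exists_density_shift_bound {f fdot : ℝ → ℝ} (hfpos : ∀ x, 0 < f x)
    (hfderiv : ∀ x, HasDerivAt f (fdot x) x) {R τ : ℝ}
    (hright : ∀ u, R < u → fdot u ≤ 0) (hleft : ∀ u, R < u → 0 ≤ fdot (-u)) :
    ∃ C : ℝ, 0 < C ∧ ∀ s, |s| ≤ τ → ∀ z, f (z + s) ≤ C * (f (z - τ) + f z + f (z + τ)) := by
  have hcont : Continuous f := continuous_iff_continuousAt.2 fun x => (hfderiv x).continuousAt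
  have hanti : AntitoneOn f (Ioi R) := by
    refine antitoneOn_of_deriv_nonpos (convex_Ioi R) hcont.continuousOn
      (fun x _ => (hfderiv x).differentiableAt.differentiableWithinAt) fun x hx => ?_
    rw [interior_Ioi] at hx
    rw [(hfderiv x).deriv]
    exact hright x hx
  have hmono : MonotoneOn f (Iio (-R)) := by
    refine monotoneOn_of_deriv_nonneg (convex_Iio (-R)) hcont.continuousOn
      (fun x _ => (hfderiv x).differentiableAt.differentiableWithinAt) fun x hx => ?_
    rw [interior_Iio] at hx
    rw [(hfderiv x).deriv]
    have := hleft (-x) (by linarith [mem_Iio.1 hx])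
    rwa [neg_neg] at this
  obtain ⟨M, hM⟩ := (isCompact_Icc (a := -(R + τ + τ)) (b := R + τ + τ)).bddAbove_image
    hcont.continuousOn
  obtain ⟨N, hN⟩ := (isCompact_Icc (a := -(R + τ)) (b := R + τ)).bddAbove_image
    (f := fun x => (f x)⁻¹) (hcont.inv₀ fun x => (hfpos x).ne').continuousOn
  refine ⟨1 + |M| * |N|, by positivity, fun s hs z => ?_⟩
  obtain ⟨hs1, hs2⟩ := abs_le.1 hs
  have ha := hfpos (z - τ)
  have hb := hfpos z
  have hc := hfpos (z + τ)
  have hMN : 0 ≤ |M| * |N| := by positivity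
  have hlow : f (z - τ) + f z + f (z + τ) ≤
      (1 + |M| * |N|) * (f (z - τ) + f z + f (z + τ)) :=
    le_mul_of_one_le_left (by positivity) (by linarith)
  rcases lt_or_ge (R + τ) z with hz | hz
  · have : f (z + s) ≤ f (z - τ) :=
      hanti (mem_Ioi.2 (by linarith)) (mem_Ioi.2 (by linarith)) (by linarith)
    linarith
  rcases lt_or_ge z (-(R + τ)) with hz' | hz'
  · have : f (z + s) ≤ f (z + τ) :=
      hmono (mem_Iio.2 (by linarith)) (mem_Iio.2 (by linarith)) (by linarith)
    linarith
  · have h1 : f (z + s) ≤ |M| :=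
      (hM ⟨z + s, ⟨by linarith, by linarith⟩, rfl⟩).trans (le_abs_self M)
    have h2 : 1 ≤ |N| * f z := by
      have h3 : (f z)⁻¹ ≤ |N| := (hN ⟨z, ⟨hz', hz⟩, rfl⟩).trans (le_abs_self N)
      calc (1 : ℝ) = (f z)⁻¹ * f z := (inv_mul_cancel₀ hb.ne').symm
        _ ≤ |N| * f z := mul_le_mul_of_nonneg_right h3 hb.le
    calc f (z + s) ≤ |M| * 1 := by linarith
      _ ≤ |M| * (|N| * f z) := mul_le_mul_of_nonneg_left h2 (abs_nonneg M)
      _ = (|M| * |N|) * f z := by ring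
      _ ≤ (1 + |M| * |N|) * (f (z - τ) + f z + f (z + τ)) :=
        mul_le_mul (by linarith) (by linarith) hb.le (by linarith)

/-- The density bound, integrated: the increments of the shifted quantile map are controlled by
those of `symmetricReparam`. -/
lemma shiftedQuantileMap_sub_le {F f Finv : ℝ → ℝ} (hFderiv : ∀ x, HasDerivAt F (f x) x)
    (hFmono : StrictMono F) (hFrange : ∀ x, F x ∈ Ioo (0 : ℝ) 1)
    (hFtop : Tendsto F atTop (𝓝 1)) (hFbot : Tendsto F atBot (𝓝 0))
    (hFinv : ∀ u ∈ Ioo (0 : ℝ) 1, F (Finv u) = u) {C s τ : ℝ}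
    (hC : ∀ z, f (z + s) ≤ C * (f (z - τ) + f z + f (z + τ)))
    {u v : ℝ} (hu : u ∈ Icc (0 : ℝ) 1) (hv : v ∈ Icc (0 : ℝ) 1) (huv : u ≤ v) :
    shiftedQuantileMap F Finv s v - shiftedQuantileMap F Finv s u ≤
      3 * C * (symmetricReparam F Finv τ v - symmetricReparam F Finv τ u) := by
  set D : ℝ → ℝ := fun z => C * (F (z + -τ) + F z + F (z + τ)) - F (z + s) with hD
  have hDmono : Monotone D := by
    have hd : ∀ z, HasDerivAt D (C * (f (z + -τ) + f z + f (z + τ)) - f (z + s)) z := fun z =>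
      (((((hFderiv _).comp_add_const z (-τ)).add (hFderiv z)).add
        ((hFderiv _).comp_add_const z τ)).const_mul C).sub ((hFderiv _).comp_add_const z s)
    refine monotone_of_deriv_nonneg (fun z => (hd z).differentiableAt) fun z => ?_
    rw [(hd z).deriv, ← sub_eq_add_neg]
    linarith [hC z]
  have hDbot : Tendsto D atBot (𝓝 (C * (0 + 0 + 0) - 0)) := by
    have h := fun a : ℝ => hFbot.comp (tendsto_atBot_add_const_right atBot a tendsto_id)
    exact ((((h (-τ)).add hFbot).add (h τ)).const_mul C).sub (h s)
  have hDtop : Tendsto D atTop (𝓝 (C * (1 + 1 + 1) - 1)) := by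
    have h := fun a : ℝ => hFtop.comp (tendsto_atTop_add_const_right atTop a tendsto_id)
    exact ((((h (-τ)).add hFtop).add (h τ)).const_mul C).sub (h s)
  have hlow := fun x => hDmono.le_of_tendsto hDbot x
  have hupp := fun x => hDmono.ge_of_tendsto hDtop x
  simp only [hD] at hlow hupp
  rcases eq_endpoint_or_eq_F hFinv hu with rfl | rfl | ⟨x, rfl⟩ <;>
  rcases eq_endpoint_or_eq_F hFinv hv with rfl | rfl | ⟨y, rfl⟩ <;>
  simp only [symmetricReparam, shiftedQuantileMap_zero, shiftedQuantileMap_one,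
    shiftedQuantileMap_F hFmono hFrange hFinv]
  · simp
  · linarith [hlow 0, hupp 0]
  · linarith [hlow y]
  · exact absurd huv (by norm_num)
  · simp
  · exact absurd (hFrange y).2 (not_lt.2 huv)
  · exact absurd (hFrange x).1 (not_lt.2 huv)
  · linarith [hupp x]
  · have := hDmono (hFmono.le_iff_le.1 huv)
    simp only [hD] at this
    linarith

/-- Lemma 2: sufficient conditions for the uniform Hölder condition B5(c).
`F` is a distribution function on `ℝ` (continuous, strictly increasing, with values in
`(0,1)` and limits `0` and `1` at `∓∞`), with everywhere-positive density `f = F'`,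
itself differentiable with bounded derivative `ḟ`, and `Finv` is the inverse of `F` on
`(0,1)`.  Hypotheses (i) and (ii) then yield B5(c): for each compact `K ⊂ ℝ` there are
a constant `c ∈ (0,∞)`, an exponent `α ∈ (1/2,1]` and an increasing homeomorphism `ξ`
of `[0,1]` such that
`sup_{s ∈ K} sup_{u,v ∈ [0,1], |ξ(u)-ξ(v)| ≤ ε} |F(F⁻¹(u)+s) - F(F⁻¹(v)+s)| ≤ c ε^α`
for all `ε ∈ (0,1)`. -/
theorem lemma2_sufficient_conditions_for_B5c
    (F f fdot Finv : ℝ → ℝ)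
    (hFderiv : ∀ x, HasDerivAt F (f x) x)
    (hfpos : ∀ x, 0 < f x)
    (hfderiv : ∀ x, HasDerivAt f (fdot x) x)
    (hfdotbdd : ∃ M : ℝ, ∀ x, |fdot x| ≤ M)
    (hFmono : StrictMono F)
    (hFrange : ∀ x, F x ∈ Ioo (0 : ℝ) 1)
    (hFtop : Filter.Tendsto F Filter.atTop (nhds 1))
    (hFbot : Filter.Tendsto F Filter.atBot (nhds 0))
    (hFinv : ∀ u ∈ Ioo (0 : ℝ) 1, F (Finv u) = u)
    -- hypothesis (i)
    (hyp1 : ∀ τ : ℝ, 0 ≤ τ → ∃ c1 : ℝ, 0 ≤ c1 ∧ ∀ u : ℝ, c1 < u →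
      fdot u < 0 ∧ 0 < fdot (-u) ∧
      f (-u) * fdot (-u + τ) - fdot (-u) * f (-u + τ) ≤ 0 ∧
      0 ≤ f u * fdot (u - τ) - fdot u * f (u - τ))
    -- hypothesis (ii)
    (hyp2 : ∀ τ : ℝ, 0 ≤ τ → ∃ c2 : ℝ, 0 < c2 ∧ ∃ α : ℝ, α ∈ Ioc (1/2 : ℝ) 1 ∧
      ∃ ξ : ℝ → ℝ, IsIncreasingSelfHomeoOfUnitInterval ξ ∧
        ∃ ε₀ : ℝ, 0 < ε₀ ∧ ∀ ε : ℝ, 0 < ε → ε < ε₀ →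
          max (shiftedQuantileMap F Finv τ (ξ ε))
              (1 - shiftedQuantileMap F Finv (-τ) (ξ (1 - ε))) ≤ c2 * ε ^ α) :
    -- conclusion: condition B5(c)
    ∀ K : Set ℝ, IsCompact K →
      ∃ c : ℝ, 0 < c ∧ ∃ α : ℝ, α ∈ Ioc (1/2 : ℝ) 1 ∧
        ∃ ξ : ℝ → ℝ, IsIncreasingSelfHomeoOfUnitInterval ξ ∧
          ∀ ε : ℝ, ε ∈ Ioo (0 : ℝ) 1 → ∀ s ∈ K, ∀ u ∈ Icc (0 : ℝ) 1, ∀ v ∈ Icc (0 : ℝ) 1,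
            |ξ u - ξ v| ≤ ε →
              |shiftedQuantileMap F Finv s u - shiftedQuantileMap F Finv s v| ≤ c * ε ^ α := by
  intro K hK
  obtain ⟨τ₀, hτ₀⟩ := hK.isBounded.exists_norm_le
  obtain ⟨c1, -, hc1⟩ := hyp1 0 le_rfl
  obtain ⟨C, hCpos, hC⟩ := exists_density_shift_bound hfpos hfderiv (τ := τ₀)
    (fun u hu => (hc1 u hu).1.le) (fun u hu => (hc1 u hu).2.1.le)
  refine ⟨3 * C, by positivity, 1, by norm_num, symmetricReparam F Finv τ₀,
    isIncreasingSelfHomeo_symmetricReparam hFmono hFrange hFinv τ₀, ?_⟩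
  intro ε _ s hs u hu v hv huv
  have hinc := fun {a b : ℝ} => shiftedQuantileMap_sub_le (u := a) (v := b) hFderiv hFmono hFrange
    hFtop hFbot hFinv (hC s (hτ₀ s hs))
  have hmono := (strictMonoOn_shiftedQuantileMap hFmono hFrange hFinv s).monotoneOn
  rw [Real.rpow_one]
  obtain ⟨h1, h2⟩ := abs_le.1 huv
  rcases le_total u v with h | h
  · rw [abs_sub_comm, abs_of_nonneg (sub_nonneg.2 (hmono hu hv h))]
    exact (hinc hu hv h).trans (mul_le_mul_of_nonneg_left (by linarith) (by positivity))
  · rw [abs_of_nonneg (sub_nonneg.2 (hmono hv hu h))]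
    exact (hinc hv hu h).trans (mul_le_mul_of_nonneg_left (by linarith) (by positivity))
end

section
/- Let F(v) = 1 - exp(-e^v) be the extreme value distribution function, so that for u ∈ (0,1), F^{-1}(u) = log(-log(1 - u)) and F(F^{-1}(u) + s) = 1 - (1 - u)^{e^s}. Let K ⊂ ℝ be compact and set η₁ = inf_{s ∈ K} e^s and η₂ = sup_{s ∈ K} e^s. Then for all s ∈ K and all u, v ∈ [0, 1] (with the boundary conventions F(F^{-1}(0) + s) = 0 and F(F^{-1}(1) + s) = 1): |F(F^{-1}(u) + s) - F(F^{-1}(v) + s)| ≤ (η₂/η₁)·|(1 - u)^{η₁} - (1 - v)^{η₁}|. -/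
open Set

/-!
Put `r = e^s / η₁`. Compactness of `K` means that `η₁` is attained, hence positive, so `r ≥ 1` is a
genuine exponent and `(1-u)^(e^s) = ((1-u)^η₁)^r`. On `[0,1]` the derivative `r x^(r-1)` of `x ↦ x^r`
is bounded by `r`, so this map is `r`-Lipschitz there by the mean value inequality
(`abs_rpow_sub_rpow_le`); finally `r ≤ η₂ / η₁`.
-/

/-- For `r ≥ 1` the map `x ↦ x ^ r` is `r`-Lipschitz on `[0,1]`. -/
lemma abs_rpow_sub_rpow_le {r a b : ℝ} (hr : 1 ≤ r) (ha : a ∈ Icc (0 : ℝ) 1)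
    (hb : b ∈ Icc (0 : ℝ) 1) : |a ^ r - b ^ r| ≤ r * |a - b| := by
  have h := (convex_Icc (0 : ℝ) 1).norm_image_sub_le_of_norm_hasDerivWithin_le
    (f := fun x : ℝ => x ^ r) (f' := fun x : ℝ => r * x ^ (r - 1)) (C := r)
    (fun x _ => (Real.hasDerivAt_rpow_const (Or.inr hr)).hasDerivWithinAt)
    (fun x hx => by
      have h0 : 0 ≤ x ^ (r - 1) := Real.rpow_nonneg hx.1 _
      have h1 : x ^ (r - 1) ≤ 1 := Real.rpow_le_one hx.1 hx.2 (by linarith)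
      rw [Real.norm_eq_abs, abs_of_nonneg (by positivity)]
      nlinarith)
    hb ha
  simpa only [Real.norm_eq_abs] using h

/-- B5(c) bound for the extreme value distribution `F(v) = 1 - exp(-e^v)`:
here `F(F⁻¹(u) + s) = 1 - (1-u)^(e^s)` (with the boundary conventions giving `0`
at `u = 0` and `1` at `u = 1`).  If `K ⊂ ℝ` is compact (and nonempty) with
`η₁ = inf_{s ∈ K} e^s` and `η₂ = sup_{s ∈ K} e^s`, then for all `s ∈ K` and
`u, v ∈ [0,1]`,
`|F(F⁻¹(u)+s) - F(F⁻¹(v)+s)| ≤ (η₂/η₁) |(1-u)^η₁ - (1-v)^η₁|`. -/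
theorem extremeValue_B5c_bound
    (K : Set ℝ) (hK : IsCompact K) (hKne : K.Nonempty)
    (η₁ η₂ : ℝ)
    (hη₁ : IsGLB ((fun s => Real.exp s) '' K) η₁)
    (hη₂ : IsLUB ((fun s => Real.exp s) '' K) η₂) :
    ∀ s ∈ K, ∀ u ∈ Icc (0 : ℝ) 1, ∀ v ∈ Icc (0 : ℝ) 1,
      |(1 - (1 - u) ^ Real.exp s) - (1 - (1 - v) ^ Real.exp s)| ≤
        (η₂ / η₁) * |(1 - u) ^ η₁ - (1 - v) ^ η₁| := by
  intro s hs u hu v hv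
  obtain ⟨t, -, rfl⟩ : η₁ ∈ (fun s => Real.exp s) '' K :=
    hη₁.mem_of_isClosed (hKne.image _) (hK.image Real.continuous_exp).isClosed
  have hpos : 0 < Real.exp t := Real.exp_pos t
  have h₁ : Real.exp t ≤ Real.exp s := hη₁.1 (mem_image_of_mem _ hs)
  have h₂ : Real.exp s ≤ η₂ := hη₂.1 (mem_image_of_mem _ hs)
  have key : ∀ w ∈ Icc (0 : ℝ) 1, (1 - w) ^ Real.exp t ∈ Icc (0 : ℝ) 1 ∧
      (1 - w) ^ Real.exp s = ((1 - w) ^ Real.exp t) ^ (Real.exp s / Real.exp t) := by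
    intro w hw
    have hw0 : 0 ≤ 1 - w := by linarith [hw.2]
    refine ⟨⟨Real.rpow_nonneg hw0 _, Real.rpow_le_one hw0 (by linarith [hw.1]) hpos.le⟩, ?_⟩
    rw [← Real.rpow_mul hw0, mul_div_cancel₀ _ hpos.ne']
  obtain ⟨hu1, hu2⟩ := key u hu
  obtain ⟨hv1, hv2⟩ := key v hv
  rw [sub_sub_sub_cancel_left, abs_sub_comm, hu2, hv2]
  refine (abs_rpow_sub_rpow_le ((one_le_div hpos).2 h₁) hu1 hv1).trans ?_
  dsimp only
  gcongr
end

section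
/- Fix γ ∈ (0, ∞) and let F(u) = 1 - (1 + γe^u)^{-1/γ} be the Pareto distribution function. For s ∈ ℝ and u ∈ [0, 1), one has F(F^{-1}(u) + s) = 1 - [1 + e^s((1 - u)^{-γ} - 1)]^{-1/γ} (and the value 1 at u = 1). For every compact K ⊂ ℝ there exists a finite constant c such that for all s ∈ K and all u, v ∈ [0, 1]: |F(F^{-1}(u) + s) - F(F^{-1}(v) + s)| ≤ c·|u - v|. In particular F satisfies condition B5(c) with α = 1 and ξ the identity map. -/
/-!
With `a = e^s` and `x = 1 - u`, the survival function `1 - F(F⁻¹(u) + s)` equals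
`x * (a + (1 - a) x^γ)^(-1/γ)`: factoring `x^(-γ)` out of the bracket removes the singularity
at `x = 0`. Its derivative on `(0, 1)` collapses to `a (a + (1 - a) x^γ)^(-1/γ - 1)`. The base
is a convex combination of `a` and `1`, so for `|s| ≤ M` it is at least `e^(-M)` and the derivative
lies between `0` and `e^M (e^(-M))^(-1/γ - 1)`, uniformly in `s`; the mean value inequality
on `[0, 1]` gives the Lipschitz bound.
-/

open Set

/-- The map `u ↦ F(F⁻¹(u) + s)` for the Pareto distribution
`F(u) = 1 - (1 + γ e^u)^(-1/γ)`, written in closed form and extended continuously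
to `u ∈ [0,1]` (value `1` at `u = 1`). -/
noncomputable def paretoShiftedMap (γ s u : ℝ) : ℝ :=
  if u = 1 then 1 else 1 - (1 + Real.exp s * ((1 - u) ^ (-γ) - 1)) ^ (-(1 / γ))

/-- The survival function `1 - F(F⁻¹(1 - x) + log a)` in the form
`x (a + (1 - a) x^γ)^(-1/γ)`, which is regular at `x = 0`. -/
noncomputable def paretoSurvival (γ a x : ℝ) : ℝ :=
  x * (a + (1 - a) * x ^ γ) ^ (-(1 / γ))

lemma le_paretoBase {γ a m x : ℝ} (hγ : 0 < γ) (hma : m ≤ a) (hm1 : m ≤ 1)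
    (hx : x ∈ Icc (0 : ℝ) 1) : m ≤ a + (1 - a) * x ^ γ := by
  have h0 : 0 ≤ x ^ γ := Real.rpow_nonneg hx.1 _
  have h1 : x ^ γ ≤ 1 := Real.rpow_le_one hx.1 hx.2 hγ.le
  nlinarith [mul_nonneg (sub_nonneg.2 hma) (sub_nonneg.2 h1), mul_nonneg (sub_nonneg.2 hm1) h0]

lemma paretoBase_pos {γ a x : ℝ} (hγ : 0 < γ) (ha : 0 < a)
    (hx : x ∈ Icc (0 : ℝ) 1) : 0 < a + (1 - a) * x ^ γ :=
  lt_of_lt_of_le (lt_min ha one_pos)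
    (le_paretoBase hγ (min_le_left a 1) (min_le_right a 1) hx)

lemma paretoShiftedMap_eq {γ s u : ℝ} (hγ : 0 < γ) (hu : u ∈ Icc (0 : ℝ) 1) :
    paretoShiftedMap γ s u = 1 - paretoSurvival γ (Real.exp s) (1 - u) := by
  unfold paretoShiftedMap paretoSurvival
  split_ifs with h
  · simp [h]
  · have hx : 0 < 1 - u := sub_pos.2 (lt_of_le_of_ne hu.2 h)
    have hD := paretoBase_pos hγ (Real.exp_pos s)
      (show 1 - u ∈ Icc (0 : ℝ) 1 from ⟨hx.le, by linarith [hu.1]⟩)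
    have key : 1 + Real.exp s * ((1 - u) ^ (-γ) - 1)
        = (1 - u) ^ (-γ) * (Real.exp s + (1 - Real.exp s) * (1 - u) ^ γ) := by
      have : (1 - u) ^ (-γ) * (1 - u) ^ γ = 1 := by
        rw [← Real.rpow_add hx]; simp
      linear_combination (Real.exp s - 1) * this
    rw [key, Real.mul_rpow (Real.rpow_nonneg hx.le _) hD.le, ← Real.rpow_mul hx.le]
    have : -γ * -(1 / γ) = 1 := by field_simp
    rw [this, Real.rpow_one]

lemma hasDerivAt_paretoSurvival {γ a x : ℝ} (hγ : 0 < γ) (ha : 0 < a)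
    (hx : x ∈ Ioo (0 : ℝ) 1) :
    HasDerivAt (paretoSurvival γ a)
      (a * (a + (1 - a) * x ^ γ) ^ (-(1 / γ) - 1)) x := by
  have hD := paretoBase_pos hγ ha (Ioo_subset_Icc_self hx)
  have h1 : HasDerivAt (fun x : ℝ => a + (1 - a) * x ^ γ) ((1 - a) * (γ * x ^ (γ - 1))) x :=
    ((Real.hasDerivAt_rpow_const (Or.inl hx.1.ne')).const_mul (1 - a)).const_add a
  have h2 := (hasDerivAt_id x).mul (h1.rpow_const (p := -(1 / γ)) (Or.inl hD.ne'))
  refine h2.congr_deriv ?_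
  have e1 : (a + (1 - a) * x ^ γ) ^ (-(1 / γ))
      = (a + (1 - a) * x ^ γ) ^ (-(1 / γ) - 1) * (a + (1 - a) * x ^ γ) := by
    rw [Real.rpow_sub_one hD.ne']; field_simp
  have e2 : x * x ^ (γ - 1) = x ^ γ := by
    rw [Real.rpow_sub_one hx.1.ne']; field_simp [hx.1.ne']
  have e3 : γ * (1 / γ) = 1 := by field_simp
  simp only [id, e1]
  linear_combination
    (-(1 - a) * (γ * (1 / γ)) * (a + (1 - a) * x ^ γ) ^ (-(1 / γ) - 1)) * e2
      - (1 - a) * x ^ γ * (a + (1 - a) * x ^ γ) ^ (-(1 / γ) - 1) * e3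

lemma continuousOn_paretoSurvival {γ a : ℝ} (hγ : 0 < γ) (ha : 0 < a) :
    ContinuousOn (paretoSurvival γ a) (Icc 0 1) := by
  refine continuousOn_id.mul (ContinuousOn.rpow_const ?_
    fun x hx => Or.inl (paretoBase_pos hγ ha hx).ne')
  exact continuousOn_const.add (continuousOn_const.mul
    (Real.continuous_rpow_const hγ.le).continuousOn)

/-- Lipschitz bound on `[0, 1]`, uniform over `a ∈ [m, A]` with `0 < m ≤ 1`. -/
lemma abs_paretoSurvival_sub_le {γ a m A x y : ℝ} (hγ : 0 < γ) (hm : 0 < m) (hma : m ≤ a)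
    (hm1 : m ≤ 1) (haA : a ≤ A) (hx : x ∈ Icc (0 : ℝ) 1) (hy : y ∈ Icc (0 : ℝ) 1) :
    |paretoSurvival γ a x - paretoSurvival γ a y| ≤ A * m ^ (-(1 / γ) - 1) * |x - y| := by
  wlog hxy : y ≤ x generalizing x y
  · rw [abs_sub_comm, abs_sub_comm x]
    exact this hy hx (le_of_not_ge hxy)
  have ha : 0 < a := hm.trans_le hma
  have hc := continuousOn_paretoSurvival hγ ha
  have hd : DifferentiableOn ℝ (paretoSurvival γ a) (interior (Icc 0 1)) := by
    rw [interior_Icc]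
    exact fun z hz =>
      (hasDerivAt_paretoSurvival hγ ha hz).differentiableAt.differentiableWithinAt
  have hup := (convex_Icc (0 : ℝ) 1).image_sub_le_mul_sub_of_deriv_le hc hd
    (C := A * m ^ (-(1 / γ) - 1)) (by
      rw [interior_Icc]
      intro z hz
      rw [(hasDerivAt_paretoSurvival hγ ha hz).deriv]
      have hexp : -(1 / γ) - 1 ≤ 0 := by
        have : 0 < 1 / γ := by positivity
        linarith
      have hz' := Ioo_subset_Icc_self hz
      exact mul_le_mul haA
        (Real.rpow_le_rpow_of_nonpos hm (le_paretoBase hγ hma hm1 hz') hexp)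
        (Real.rpow_nonneg (paretoBase_pos hγ ha hz').le _) (ha.le.trans haA)) y hy x hx hxy
  have hlo := (convex_Icc (0 : ℝ) 1).mul_sub_le_image_sub_of_le_deriv hc hd
    (C := 0) (by
      rw [interior_Icc]
      intro z hz
      rw [(hasDerivAt_paretoSurvival hγ ha hz).deriv]
      exact mul_nonneg ha.le
        (Real.rpow_nonneg (paretoBase_pos hγ ha (Ioo_subset_Icc_self hz)).le _)) y hy x hx hxy
  rw [abs_of_nonneg (by linarith), abs_of_nonneg (sub_nonneg.2 hxy)]
  exact hup

/-- B5(c) for the Pareto family with `α = 1` and `ξ` the identity: for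
`F(u) = 1 - (1 + γ e^u)^(-1/γ)` with `γ ∈ (0,∞)`, one has the closed form
`F(F⁻¹(u)+s) = 1 - (1 + e^s((1-u)^(-γ) - 1))^(-1/γ)` for `u ∈ (0,1)`, and for every
compact `K ⊂ ℝ` there is a finite constant `c` such that for all `s ∈ K` and
`u, v ∈ [0,1]`, `|F(F⁻¹(u)+s) - F(F⁻¹(v)+s)| ≤ c |u - v|`. -/
theorem pareto_B5c_lipschitz
    (γ : ℝ) (hγ : 0 < γ)
    (F Finv : ℝ → ℝ)
    (hF : ∀ u, F u = 1 - (1 + γ * Real.exp u) ^ (-(1 / γ)))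
    (hFinv : ∀ u ∈ Ioo (0 : ℝ) 1, F (Finv u) = u) :
    (∀ s : ℝ, ∀ u ∈ Ioo (0 : ℝ) 1, F (Finv u + s) = paretoShiftedMap γ s u) ∧
    (∀ K : Set ℝ, IsCompact K → ∃ c : ℝ,
      ∀ s ∈ K, ∀ u ∈ Icc (0 : ℝ) 1, ∀ v ∈ Icc (0 : ℝ) 1,
        |paretoShiftedMap γ s u - paretoShiftedMap γ s v| ≤ c * |u - v|) := by
  constructor
  · intro s u hu
    have hb : 0 ≤ 1 + γ * Real.exp (Finv u) := by positivity
    have h1 : 1 - u = (1 + γ * Real.exp (Finv u)) ^ (-(1 / γ)) := by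
      have := hFinv u hu
      rw [hF] at this
      linarith
    have h2 : (1 - u) ^ (-γ) = 1 + γ * Real.exp (Finv u) := by
      have e : -(1 / γ) * -γ = 1 := by field_simp
      rw [h1, ← Real.rpow_mul hb, e, Real.rpow_one]
    rw [hF, paretoShiftedMap, if_neg hu.2.ne, h2, Real.exp_add]
    ring_nf
  · intro K hK
    obtain ⟨M, hM⟩ := hK.isBounded.exists_norm_le
    refine ⟨Real.exp M * Real.exp (-M) ^ (-(1 / γ) - 1), fun s hs u hu v hv => ?_⟩
    have hsM : |s| ≤ M := hM s hs
    have hM0 : 0 ≤ M := (abs_nonneg s).trans hsM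
    obtain ⟨hs1, hs2⟩ := abs_le.1 hsM
    have h := abs_paretoSurvival_sub_le (γ := γ) (x := 1 - v) (y := 1 - u) hγ
      (Real.exp_pos (-M)) (Real.exp_le_exp.2 hs1) (Real.exp_le_one_iff.2 (by linarith))
      (Real.exp_le_exp.2 hs2) ⟨by linarith [hv.2], by linarith [hv.1]⟩
      ⟨by linarith [hu.2], by linarith [hu.1]⟩
    rw [paretoShiftedMap_eq hγ hu, paretoShiftedMap_eq hγ hv]
    rw [sub_sub_sub_cancel_left] at h ⊢
    exact h
end

section
/- Fix γ ∈ (1, ∞), set r_γ = γ/(2Γ(1/γ)), and let F(u) = r_γ ∫_{-∞}^u exp(-|s|^γ) ds. Then for every τ > 0 and every α ∈ (0, 1) there exist a constant k < ∞ and ε₀ > 0 such that for all ε ∈ (0, ε₀): 1 - F(F^{-1}(1 - ε) - τ) ≤ k·ε^α. -/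
open MeasureTheory Set

/-!
The argument compares the tail `T x = ∫_{x}^∞ exp (-|s|^γ) ds` with `exp (-x^γ)` on both sides.
Since `1 ≤ γ`, the power `x ↦ x^γ` is superadditive on `[0, ∞)`, so shifting the integral to the
origin gives `T y ≤ exp (-y^γ) * T₀` for `0 ≤ y`, with `T₀` the total mass
(`expPower_tail_le`); integrating over `(x, x + 1]` alone gives `exp (-(x+1)^γ) ≤ T x`
(`le_expPower_tail`). If `β = α^(1/γ) < 1`, then `β (x + 1) ≤ x - τ` for all large `x`, hence
`T (x - τ) ≤ T₀ exp (-α (x+1)^γ) ≤ T₀ (T x)^α`. The normalising constant turns `T` into `1 - F`,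
and small `ε` forces the quantile at `1 - ε` to be large.
-/

lemma expPower_integral {γ : ℝ} (hγ : 0 < γ) :
    ∫ s : ℝ, Real.exp (-(|s| ^ γ)) = 2 * Real.Gamma (1 / γ + 1) := by
  rw [integral_comp_abs (f := fun s => Real.exp (-(s ^ γ))), integral_exp_neg_rpow hγ]

/-- A non-integrable function has Bochner integral `0`, so the nonzero value of the integral
already yields integrability. -/
lemma expPower_integrable {γ : ℝ} (hγ : 0 < γ) :
    Integrable (fun s : ℝ => Real.exp (-(|s| ^ γ))) := by
  refine not_imp_comm.1 integral_undef ?_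
  rw [expPower_integral hγ]
  have : 0 < Real.Gamma (1 / γ + 1) := Real.Gamma_pos_of_pos (by positivity)
  positivity

lemma expPower_tail_le {γ : ℝ} (hγ : 1 < γ) {y : ℝ} (hy : 0 ≤ y) :
    ∫ s in Ioi y, Real.exp (-(|s| ^ γ)) ≤
      Real.exp (-(y ^ γ)) * ∫ s : ℝ, Real.exp (-(|s| ^ γ)) := by
  have hint := expPower_integrable (zero_lt_one.trans hγ)
  have hshift := (hint.comp_sub_right y).const_mul (Real.exp (-(y ^ γ)))
  calc ∫ s in Ioi y, Real.exp (-(|s| ^ γ))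
      ≤ ∫ s in Ioi y, Real.exp (-(y ^ γ)) * Real.exp (-(|s - y| ^ γ)) := by
        refine setIntegral_mono_on hint.integrableOn hshift.integrableOn measurableSet_Ioi ?_
        intro s hs
        have hs : y < s := hs
        rw [← Real.exp_add, Real.exp_le_exp, abs_of_nonneg (hy.trans hs.le),
          abs_of_pos (sub_pos.2 hs)]
        have h := NNReal.add_rpow_le_rpow_add ⟨y, hy⟩ ⟨s - y, (sub_pos.2 hs).le⟩ hγ.le
        have h : y ^ γ + (s - y) ^ γ ≤ (y + (s - y)) ^ γ := by exact_mod_cast h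
        rw [add_sub_cancel] at h
        linarith
    _ ≤ ∫ s : ℝ, Real.exp (-(y ^ γ)) * Real.exp (-(|s - y| ^ γ)) :=
        setIntegral_le_integral hshift (ae_of_all _ fun s => by positivity)
    _ = _ := by
        rw [integral_const_mul,
          integral_sub_right_eq_self (fun s : ℝ => Real.exp (-(|s| ^ γ))) y]

lemma le_expPower_tail {γ : ℝ} (hγ : 0 < γ) {x : ℝ} (hx : 0 ≤ x) :
    Real.exp (-((x + 1) ^ γ)) ≤ ∫ s in Ioi x, Real.exp (-(|s| ^ γ)) := by
  have hint := expPower_integrable hγ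
  calc Real.exp (-((x + 1) ^ γ))
      = Real.exp (-((x + 1) ^ γ)) * volume.real (Ioc x (x + 1)) := by simp
    _ ≤ ∫ s in Ioc x (x + 1), Real.exp (-(|s| ^ γ)) := by
        refine setIntegral_ge_of_const_le_real measurableSet_Ioc (by simp) ?_ hint.integrableOn
        rintro s ⟨hs, hs'⟩
        rw [Real.exp_le_exp, neg_le_neg_iff, abs_of_nonneg (hx.trans hs.le)]
        exact Real.rpow_le_rpow (hx.trans hs.le) hs' hγ.le
    _ ≤ _ := setIntegral_mono_set hint.integrableOn
        (ae_of_all _ fun s => (Real.exp_pos _).le) Ioc_subset_Ioi_self.eventuallyLE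

/-- Tail estimate verifying Lemma 2(ii) for the exponential-power family: for
`γ ∈ (1,∞)`, `r_γ = γ/(2Γ(1/γ))` and `F(u) = r_γ ∫_{-∞}^u exp(-|s|^γ) ds` (with
inverse `Finv` on `(0,1)`), for every `τ > 0` and `α ∈ (0,1)` there exist a finite
constant `k` and `ε₀ > 0` such that `1 - F(F⁻¹(1-ε) - τ) ≤ k ε^α` for all
`ε ∈ (0, ε₀)`. -/
theorem expPower_upper_tail_shift_bound
    (γ : ℝ) (hγ : 1 < γ)
    (F Finv : ℝ → ℝ)
    (hF : ∀ u, F u = γ / (2 * Real.Gamma (1 / γ)) * ∫ s in Iic u, Real.exp (-(|s| ^ γ)))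
    (hFinv : ∀ u ∈ Ioo (0 : ℝ) 1, F (Finv u) = u)
    (τ α : ℝ) (hτ : 0 < τ) (hα : α ∈ Ioo (0 : ℝ) 1) :
    ∃ k : ℝ, ∃ ε₀ : ℝ, 0 < ε₀ ∧ ∀ ε ∈ Ioo (0 : ℝ) ε₀,
      1 - F (Finv (1 - ε) - τ) ≤ k * ε ^ α := by
  obtain ⟨hα0, hα1⟩ := hα
  have hγ0 : 0 < γ := zero_lt_one.trans hγ
  have hint := expPower_integrable hγ0
  set r : ℝ := γ / (2 * Real.Gamma (1 / γ)) with hr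
  have hΓ : 0 < Real.Gamma (1 / γ) := Real.Gamma_pos_of_pos (by positivity)
  have hr0 : 0 < r := by positivity
  have htotal : r * ∫ s : ℝ, Real.exp (-(|s| ^ γ)) = 1 := by
    rw [expPower_integral hγ0, Real.Gamma_add_one (by positivity), hr]
    field_simp
  have htail (u : ℝ) : 1 - F u = r * ∫ s in Ioi u, Real.exp (-(|s| ^ γ)) := by
    rw [hF, ← htotal, ← intervalIntegral.integral_Iic_add_Ioi
      (hint.integrableOn (s := Iic u)) hint.integrableOn]
    ring
  have hlow {x : ℝ} (hx : 0 ≤ x) : r * Real.exp (-((x + 1) ^ γ)) ≤ 1 - F x := by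
    rw [htail]
    exact mul_le_mul_of_nonneg_left (le_expPower_tail hγ0 hx) hr0.le
  have hup {y : ℝ} (hy : 0 ≤ y) : 1 - F y ≤ Real.exp (-(y ^ γ)) := by
    calc 1 - F y ≤ r * (Real.exp (-(y ^ γ)) * ∫ s : ℝ, Real.exp (-(|s| ^ γ))) := by
          rw [htail]
          exact mul_le_mul_of_nonneg_left (expPower_tail_le hγ hy) hr0.le
      _ = Real.exp (-(y ^ γ)) * (r * ∫ s : ℝ, Real.exp (-(|s| ^ γ))) := by ring
      _ = _ := by rw [htotal, mul_one]
  have hmono : Monotone F := by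
    intro u v huv
    rw [hF, hF]
    refine mul_le_mul_of_nonneg_left ?_ hr0.le
    exact setIntegral_mono_set hint.integrableOn
      (ae_of_all _ fun s => (Real.exp_pos _).le) (Iic_subset_Iic.2 huv).eventuallyLE
  set β : ℝ := α ^ (1 / γ) with hβ
  have hβ0 : 0 < β := Real.rpow_pos_of_pos hα0 _
  have hβ1 : β < 1 := Real.rpow_lt_one hα0.le hα1 (by positivity)
  have hβγ : β ^ γ = α := by
    rw [hβ, ← Real.rpow_mul hα0.le, one_div_mul_cancel hγ0.ne', Real.rpow_one]
  -- `M` solves `M - τ = β (M + 1)`; beyond it, `β (x + 1) ≤ x - τ`.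
  set M : ℝ := (τ + β) / (1 - β) with hM
  have hM0 : 0 ≤ M := div_nonneg (by positivity) (by linarith)
  have hFM : 0 < 1 - F M := lt_of_lt_of_le (by positivity) (hlow hM0)
  refine ⟨(r ^ α)⁻¹, min 1 (1 - F M), lt_min one_pos hFM, ?_⟩
  rintro ε ⟨hε0, hε⟩
  have hε1 := hε.trans_le (min_le_left _ _)
  have hεM := hε.trans_le (min_le_right _ _)
  have hFx := hFinv (1 - ε) ⟨by linarith, by linarith⟩
  set x := Finv (1 - ε)
  have hMx : M < x := hmono.reflect_lt (by linarith)
  have hx0 : 0 ≤ x := hM0.trans hMx.le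
  have hlin : β * (x + 1) ≤ x - τ := by
    have := (div_lt_iff₀ (by linarith : 0 < 1 - β)).1 hMx
    linarith
  have hβx : 0 ≤ β * (x + 1) := by positivity
  have hpow : α * (x + 1) ^ γ ≤ (x - τ) ^ γ := by
    rw [← hβγ, ← Real.mul_rpow hβ0.le (by positivity)]
    exact Real.rpow_le_rpow hβx hlin hγ0.le
  have hlowx := hlow hx0
  rw [hFx, sub_sub_cancel] at hlowx
  calc 1 - F (x - τ) ≤ Real.exp (-((x - τ) ^ γ)) := hup (hβx.trans hlin)
    _ ≤ Real.exp (-((x + 1) ^ γ) * α) := Real.exp_le_exp.2 (by linarith)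
    _ = (r ^ α)⁻¹ * (r * Real.exp (-((x + 1) ^ γ))) ^ α := by
        rw [Real.mul_rpow hr0.le (Real.exp_pos _).le, ← Real.exp_mul, inv_mul_cancel_left₀]
        positivity
    _ ≤ (r ^ α)⁻¹ * ε ^ α := by
        refine mul_le_mul_of_nonneg_left ?_ (by positivity)
        exact Real.rpow_le_rpow (by positivity) hlowx hα0.le
end
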